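/- Let n be a positive integer and let B be a positive integer dividing n. Partition [n] into consecutive blocks B₁, …, B_{n/B} of size B, and let σ ∈ {−1,1}^n be a vector of independent uniform ±1 random variables. Define the (n/B)×n random matrix S by (Sv)_i = Σ_{j ∈ B_i} σ_j v_j. Then: (i) for every p ∈ [1, ∞), every n×n real matrix A, every x ∈ ℝ^n, and every realization of the signs, ‖SAx‖_p ≤ B^{1−1/p}·‖Ax‖_p; and (ii) for every p ∈ [1, 2] there is a constant C_p > 0 (depending only on p) such that for every A and x, ‖Ax‖_p^p ≤ C_p·B^{1−p/2}·E_σ[‖SAx‖_p^p], where the expectation is over the random signs σ. -/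

import Mathlib

/-!
The upper bound is Hölder's inequality in each block. For the lower bound, independence gives
`E S⁴ ≤ 3 (E S²)²` for a random signed sum `S`, so integrating the pointwise inequality
`z² ≤ T ^ (1 - p / 2) |z| ^ p + z⁴ / T` at a threshold `T` proportional to `E S²` bounds
`(E S²) ^ (p / 2)` by a multiple of `E |S| ^ p` (Khintchine's inequality). On a block of size `B`
the power mean inequality compares `E S²`, the squared ℓ₂ norm of the block, with its ℓ_p norm at
the cost of the factor `B ^ (1 - p / 2)`.
-/

open MeasureTheory ENNReal

/-- The ℓ_p norm of a vector in ℝ^n, for p ∈ [1,∞] (p : ℝ≥0∞),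
with `lpNorm ∞ x = max_i |x i|`. -/
noncomputable def lpNorm (p : ℝ≥0∞) {n : ℕ} (x : Fin n → ℝ) : ℝ :=
  if p = ∞ then ⨆ i, |x i| else (∑ i, |x i| ^ p.toReal) ^ (1 / p.toReal)

/-- The q→p operator norm of a real m×n matrix:
`opNorm q p A = sup_{x} ‖Ax‖_p / ‖x‖_q` (with the convention 0/0 = 0 at x = 0). -/
noncomputable def opNorm (q p : ℝ≥0∞) {m n : ℕ} (A : Matrix (Fin m) (Fin n) ℝ) : ℝ :=
  ⨆ x : Fin n → ℝ, lpNorm p (A.mulVec x) / lpNorm q x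

/-- The uniform ±1 distribution on ℝ. -/
noncomputable def signMeasure : Measure ℝ :=
  (1/2 : ℝ≥0∞) • Measure.dirac 1 + (1/2 : ℝ≥0∞) • Measure.dirac (-1)

/-- The distribution of a vector of n independent uniform ±1 signs. -/
noncomputable def signVec (n : ℕ) : Measure (Fin n → ℝ) :=
  Measure.pi fun _ : Fin n => signMeasure

/-- The (n/B)×n block sign-sum matrix: (Sv)_i = Σ_{j ∈ B_i} σ_j v_j where B_i is the i-th
consecutive block of size B of [n] (those j with ⌊j/B⌋ = i). -/
def blockSignRow (n B : ℕ) (σ : Fin n → ℝ) : Matrix (Fin (n / B)) (Fin n) ℝ :=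
  Matrix.of fun i j => if (j : ℕ) / B = (i : ℕ) then σ j else 0

open ProbabilityTheory

section Moments

variable {Ω : Type*} {mΩ : MeasurableSpace Ω} {μ : Measure Ω} [IsFiniteMeasure μ]

theorem integrable_abs_rpow_of_memLp {X : Ω → ℝ} {q : ℝ≥0∞} {p : ℝ} (hX : MemLp X q μ)
    (hp : 0 ≤ p) (hpq : ENNReal.ofReal p ≤ q) : Integrable (fun ω => |X ω| ^ p) μ := by
  simpa [ENNReal.toReal_ofReal hp] using (hX.mono_exponent hpq).integrable_norm_rpow'

theorem integrable_pow_of_memLp {X : Ω → ℝ} {q : ℝ≥0∞} {k : ℕ} (hX : MemLp X q μ)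
    (hk : (k : ℝ≥0∞) ≤ q) : Integrable (fun ω => X ω ^ k) μ :=
  (hX.mono_exponent hk).integrable_norm_pow'.mono' (hX.aestronglyMeasurable.pow k)
    (Filter.Eventually.of_forall fun ω => (norm_pow (X ω) k).le)

theorem integral_add_pow_of_indepFun {X Y : Ω → ℝ} {n : ℕ} (hX : MemLp X n μ) (hY : MemLp Y n μ)
    (hXY : IndepFun X Y μ) :
    ∫ ω, (X ω + Y ω) ^ n ∂μ
      = ∑ k ∈ Finset.range (n + 1),
          (∫ ω, X ω ^ k ∂μ) * (∫ ω, Y ω ^ (n - k) ∂μ) * n.choose k := by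
  have hpow (k : ℕ) : IndepFun (fun ω => X ω ^ k) (fun ω => Y ω ^ (n - k)) μ :=
    hXY.comp (measurable_id.pow_const k) (measurable_id.pow_const (n - k))
  have hint (k : ℕ) (hk : k ∈ Finset.range (n + 1)) :
      Integrable (fun ω => X ω ^ k * Y ω ^ (n - k) * n.choose k) μ :=
    ((hpow k).integrable_mul
      (integrable_pow_of_memLp hX (by exact_mod_cast Finset.mem_range_succ_iff.mp hk))
      (integrable_pow_of_memLp hY (by exact_mod_cast n.sub_le k))).mul_const _
  simp only [add_pow]
  rw [integral_finsetSum _ hint]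
  refine Finset.sum_congr rfl fun k _ => ?_
  rw [integral_mul_const, (hpow k).integral_fun_mul_eq_mul_integral
    (hX.aestronglyMeasurable.pow k) (hY.aestronglyMeasurable.pow (n - k))]

theorem sq_le_rpow_mul_abs_rpow_add_pow_four_div {p T : ℝ} (hp2 : p ≤ 2) (hT : 0 < T) (z : ℝ) :
    z ^ 2 ≤ T ^ (1 - p / 2) * |z| ^ p + z ^ 4 / T := by
  rcases le_total (z ^ 2) T with hzT | hTz
  · refine le_add_of_le_of_nonneg ?_ (by positivity)
    rcases eq_or_ne z 0 with rfl | hz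
    · simpa using by positivity
    calc z ^ 2 = (z ^ 2) ^ (1 - p / 2) * |z| ^ p := by
          rw [← sq_abs, ← Real.rpow_natCast, ← Real.rpow_mul (abs_nonneg z),
            ← Real.rpow_add (abs_pos.mpr hz)]
          congr 1
          push_cast
          ring
      _ ≤ T ^ (1 - p / 2) * |z| ^ p := by
          gcongr
          linarith
  · refine le_add_of_nonneg_of_le (by positivity) ?_
    calc z ^ 2 ≤ z ^ 2 * (z ^ 2 / T) :=
          le_mul_of_one_le_right (sq_nonneg z) ((one_le_div hT).mpr hTz)
      _ = z ^ 4 / T := by ring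

theorem rpow_integral_sq_le_of_integral_pow_four_le {X : Ω → ℝ} {K p : ℝ} (hX : MemLp X 4 μ)
    (hK : 0 < K) (hX4 : ∫ ω, X ω ^ 4 ∂μ ≤ K * (∫ ω, X ω ^ 2 ∂μ) ^ 2) (hp : 0 < p) (hp2 : p ≤ 2) :
    (∫ ω, X ω ^ 2 ∂μ) ^ (p / 2) ≤ 2 * (2 * K) ^ (1 - p / 2) * ∫ ω, |X ω| ^ p ∂μ := by
  have hQ : 0 ≤ ∫ ω, X ω ^ 2 ∂μ := integral_nonneg fun ω => sq_nonneg _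
  have hI : 0 ≤ ∫ ω, |X ω| ^ p ∂μ := integral_nonneg fun ω => by positivity
  have hXp : Integrable (fun ω => |X ω| ^ p) μ :=
    integrable_abs_rpow_of_memLp hX hp.le (ENNReal.ofReal_le_of_le_toReal (by norm_num; linarith))
  have hX2int : Integrable (fun ω => X ω ^ 2) μ := integrable_pow_of_memLp hX (by norm_num)
  have hX4int : Integrable (fun ω => X ω ^ 4) μ := integrable_pow_of_memLp hX (by norm_num)
  set Q := ∫ ω, X ω ^ 2 ∂μ
  set I := ∫ ω, |X ω| ^ p ∂μ
  rcases hQ.eq_or_lt with hQ0 | hQ0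
  · rw [← hQ0, Real.zero_rpow (by positivity)]
    positivity
  -- At the threshold `T = 2KQ` the fourth-moment term absorbs only half of `Q`.
  have habsorb : Q ≤ (2 * K * Q) ^ (1 - p / 2) * I + Q / 2 :=
    calc Q ≤ ∫ ω, ((2 * K * Q) ^ (1 - p / 2) * |X ω| ^ p + X ω ^ 4 / (2 * K * Q)) ∂μ :=
          integral_mono hX2int ((hXp.const_mul _).add (hX4int.div_const _)) fun ω =>
            sq_le_rpow_mul_abs_rpow_add_pow_four_div hp2 (by positivity) (X ω)
      _ = (2 * K * Q) ^ (1 - p / 2) * I + (∫ ω, X ω ^ 4 ∂μ) / (2 * K * Q) := by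
          rw [integral_add (hXp.const_mul _) (hX4int.div_const _), integral_const_mul,
            integral_div]
      _ ≤ (2 * K * Q) ^ (1 - p / 2) * I + K * Q ^ 2 / (2 * K * Q) := by gcongr
      _ = (2 * K * Q) ^ (1 - p / 2) * I + Q / 2 := by field_simp
  rw [Real.mul_rpow (by positivity) hQ] at habsorb
  have hsplit : Q ^ (1 - p / 2) * Q ^ (p / 2) = Q := by
    rw [← Real.rpow_add hQ0, sub_add_cancel, Real.rpow_one]
  refine le_of_mul_le_mul_left ?_ (Real.rpow_pos_of_pos hQ0 (1 - p / 2))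
  linarith

end Moments

/-- `X` has mean zero and kurtosis `E X⁴ / (Var X)²` at most `K`. The kurtosis bound is multiplied
out so that the zero variable qualifies, which makes the notion stable under scaling and, for
`K ≥ 3`, under independent sums. -/
structure CenteredKurtosisLE {Ω : Type*} {mΩ : MeasurableSpace Ω} (X : Ω → ℝ) (K : ℝ)
    (μ : Measure Ω) : Prop where
  memLp : MemLp X 4 μ
  integral_eq_zero : ∫ ω, X ω ∂μ = 0
  integral_pow_four_le : ∫ ω, X ω ^ 4 ∂μ ≤ K * Var[X; μ] ^ 2

namespace CenteredKurtosisLE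

variable {Ω : Type*} {mΩ : MeasurableSpace Ω} {μ : Measure Ω} {X Y : Ω → ℝ} {K : ℝ}

theorem variance_eq (hX : CenteredKurtosisLE X K μ) : Var[X; μ] = ∫ ω, X ω ^ 2 ∂μ :=
  variance_of_integral_eq_zero hX.memLp.aemeasurable hX.integral_eq_zero

protected theorem mono {L : ℝ} (hX : CenteredKurtosisLE X K μ) (hKL : K ≤ L) :
    CenteredKurtosisLE X L μ where
  memLp := hX.memLp
  integral_eq_zero := hX.integral_eq_zero
  integral_pow_four_le := hX.integral_pow_four_le.trans (by gcongr)

protected theorem zero (K : ℝ) (μ : Measure Ω) : CenteredKurtosisLE (0 : Ω → ℝ) K μ where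
  memLp := MemLp.zero
  integral_eq_zero := by simp
  integral_pow_four_le := by simp

protected theorem mul_const (hX : CenteredKurtosisLE X K μ) (c : ℝ) :
    CenteredKurtosisLE (fun ω => X ω * c) K μ where
  memLp := hX.memLp.mul_const c
  integral_eq_zero := by rw [integral_mul_const, hX.integral_eq_zero, zero_mul]
  integral_pow_four_le := by
    simp only [mul_pow]
    rw [integral_mul_const, variance_mul_const]
    calc (∫ ω, X ω ^ 4 ∂μ) * c ^ 4 ≤ K * Var[X; μ] ^ 2 * c ^ 4 := by
          gcongr
          exact hX.integral_pow_four_le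
      _ = K * (Var[X; μ] * c ^ 2) ^ 2 := by ring

variable [IsProbabilityMeasure μ]

protected theorem add (hX : CenteredKurtosisLE X K μ) (hY : CenteredKurtosisLE Y K μ) (hK : 3 ≤ K)
    (hXY : IndepFun X Y μ) : CenteredKurtosisLE (X + Y) K μ where
  memLp := hX.memLp.add hY.memLp
  integral_eq_zero := by
    simp only [Pi.add_apply]
    rw [integral_add (hX.memLp.integrable (by norm_num)) (hY.memLp.integrable (by norm_num)),
      hX.integral_eq_zero, hY.integral_eq_zero, add_zero]
  integral_pow_four_le := by
    have hexpand : ∫ ω, (X ω + Y ω) ^ 4 ∂μ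
        = ∫ ω, X ω ^ 4 ∂μ + 6 * Var[X; μ] * Var[Y; μ] + ∫ ω, Y ω ^ 4 ∂μ := by
      rw [integral_add_pow_of_indepFun hX.memLp hY.memLp hXY, hX.variance_eq, hY.variance_eq]
      simp only [Nat.reduceAdd, Nat.reduceSub, Finset.sum_range_succ, Finset.range_one,
        Finset.sum_singleton, Nat.choose, Nat.cast_one, Nat.cast_ofNat, pow_zero, pow_one,
        integral_const, probReal_univ, smul_eq_mul, hX.integral_eq_zero, hY.integral_eq_zero,
        mul_zero, zero_mul, add_zero, mul_one, one_mul, tsub_zero, tsub_self, Nat.add_one_sub_one]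
      ring
    have hvar : Var[X + Y; μ] = Var[X; μ] + Var[Y; μ] :=
      hXY.variance_add (hX.memLp.mono_exponent (by norm_num))
        (hY.memLp.mono_exponent (by norm_num))
    have hcross : 0 ≤ (K - 3) * (Var[X; μ] * Var[Y; μ]) :=
      mul_nonneg (sub_nonneg.mpr hK) (mul_nonneg (variance_nonneg X μ) (variance_nonneg Y μ))
    simp only [Pi.add_apply]
    rw [hexpand, hvar]
    linarith [hX.integral_pow_four_le, hY.integral_pow_four_le]

protected theorem sum {ι : Type*} {X : ι → Ω → ℝ} (hX : ∀ i, CenteredKurtosisLE (X i) K μ)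
    (hK : 3 ≤ K) (hindep : iIndepFun X μ) (s : Finset ι) :
    CenteredKurtosisLE (∑ i ∈ s, X i) K μ := by
  classical
  induction s using Finset.induction_on with
  | empty => exact .zero K μ
  | insert a s ha ih =>
    rw [Finset.sum_insert ha]
    exact (hX a).add ih hK
      (hindep.indepFun_finsetSum_of_notMem₀ (fun i => (hX i).memLp.aemeasurable) ha).symm

theorem rpow_variance_le (hX : CenteredKurtosisLE X K μ) (hK : 0 < K) {p : ℝ} (hp : 0 < p)
    (hp2 : p ≤ 2) : Var[X; μ] ^ (p / 2) ≤ 2 * (2 * K) ^ (1 - p / 2) * ∫ ω, |X ω| ^ p ∂μ := by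
  have hX4 := hX.integral_pow_four_le
  rw [hX.variance_eq] at hX4 ⊢
  exact rpow_integral_sq_le_of_integral_pow_four_le hX.memLp hK hX4 hp hp2

end CenteredKurtosisLE

theorem sum_rpow_le_card_rpow_mul_rpow_sum {ι : Type*} {p q : ℝ} (hp : 0 < p) (hpq : p ≤ q)
    (s : Finset ι) {f : ι → ℝ} (hf : ∀ i ∈ s, 0 ≤ f i) :
    ∑ i ∈ s, f i ^ p ≤ (s.card : ℝ) ^ (1 - p / q) * (∑ i ∈ s, f i ^ q) ^ (p / q) := by
  have hq : 0 < q := hp.trans_le hpq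
  have hfp (i) (hi : i ∈ s) : 0 ≤ f i ^ p := Real.rpow_nonneg (hf i hi) p
  have hfq : 0 ≤ ∑ i ∈ s, f i ^ q := Finset.sum_nonneg fun i hi => Real.rpow_nonneg (hf i hi) q
  have hpow : ∑ i ∈ s, (f i ^ p) ^ (q / p) = ∑ i ∈ s, f i ^ q :=
    Finset.sum_congr rfl fun i hi => by rw [← Real.rpow_mul (hf i hi), mul_div_cancel₀ _ hp.ne']
  calc ∑ i ∈ s, f i ^ p = ((∑ i ∈ s, f i ^ p) ^ (q / p)) ^ (p / q) := by
        rw [← Real.rpow_mul (Finset.sum_nonneg hfp), div_mul_div_cancel₀ hp.ne', div_self hq.ne',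
          Real.rpow_one]
    _ ≤ ((s.card : ℝ) ^ (q / p - 1) * ∑ i ∈ s, (f i ^ p) ^ (q / p)) ^ (p / q) := by
        gcongr
        · exact Real.rpow_nonneg (Finset.sum_nonneg hfp) _
        · exact Real.rpow_sum_le_const_mul_sum_rpow_of_nonneg s ((one_le_div hp).mpr hpq) hfp
    _ = (s.card : ℝ) ^ (1 - p / q) * (∑ i ∈ s, f i ^ q) ^ (p / q) := by
        rw [hpow, Real.mul_rpow (by positivity) hfq, ← Real.rpow_mul (Nat.cast_nonneg _)]
        congr 2
        field_simp

theorem abs_sum_mul_rpow_le {ι : Type*} {p : ℝ} (hp : 1 ≤ p) (s : Finset ι) {σ : ι → ℝ}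
    (hσ : ∀ j ∈ s, |σ j| ≤ 1) (v : ι → ℝ) :
    |∑ j ∈ s, σ j * v j| ^ p ≤ (s.card : ℝ) ^ (p - 1) * ∑ j ∈ s, |v j| ^ p := by
  have habs : |∑ j ∈ s, σ j * v j| ≤ ∑ j ∈ s, |v j| :=
    (Finset.abs_sum_le_sum_abs _ s).trans <| Finset.sum_le_sum fun j hj => by
      rw [abs_mul]
      exact mul_le_of_le_one_left (abs_nonneg _) (hσ j hj)
  calc |∑ j ∈ s, σ j * v j| ^ p ≤ (∑ j ∈ s, |v j|) ^ p := by gcongr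
    _ ≤ (s.card : ℝ) ^ (p - 1) * ∑ j ∈ s, |v j| ^ p := Real.rpow_sum_le_const_mul_sum_rpow s v hp

section WeightedSums

variable {Ω ι : Type*} {mΩ : MeasurableSpace Ω} {μ : Measure Ω} {X : ι → Ω → ℝ} {K p : ℝ}

theorem variance_sum_mul (hX : ∀ j, MemLp (X j) 2 μ) (hvar : ∀ j, Var[X j; μ] = 1)
    (hindep : iIndepFun X μ) (v : ι → ℝ) (s : Finset ι) :
    Var[fun ω => ∑ j ∈ s, X j ω * v j; μ] = ∑ j ∈ s, v j ^ 2 := by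
  have hadd := IndepFun.variance_sum (s := s) (fun j _ => (hX j).mul_const (v j)) fun i _ j _ hij =>
    (hindep.indepFun hij).comp (measurable_mul_const (v i)) (measurable_mul_const (v j))
  simpa only [Finset.sum_fn, variance_mul_const, hvar, one_mul] using hadd

theorem integrable_abs_sum_mul_rpow [IsFiniteMeasure μ] (hX : ∀ j, MemLp (X j) 4 μ) (hp : 0 ≤ p)
    (hp4 : p ≤ 4) (v : ι → ℝ) (s : Finset ι) :
    Integrable (fun ω => |∑ j ∈ s, X j ω * v j| ^ p) μ :=
  integrable_abs_rpow_of_memLp (memLp_finsetSum s fun j _ => (hX j).mul_const (v j)) hp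
    (ENNReal.ofReal_le_of_le_toReal (by simpa using hp4))

variable [IsProbabilityMeasure μ]

theorem centeredKurtosisLE_sum_mul (hX : ∀ j, CenteredKurtosisLE (X j) K μ) (hK : 3 ≤ K)
    (hindep : iIndepFun X μ) (v : ι → ℝ) (s : Finset ι) :
    CenteredKurtosisLE (fun ω => ∑ j ∈ s, X j ω * v j) K μ := by
  simpa only [Finset.sum_fn] using
    CenteredKurtosisLE.sum (fun j => (hX j).mul_const (v j)) hK
      (hindep.comp (fun j t => t * v j) fun j => measurable_mul_const (v j)) s

theorem khintchine_lower_bound (hX : ∀ j, CenteredKurtosisLE (X j) K μ)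
    (hvar : ∀ j, Var[X j; μ] = 1) (hK : 3 ≤ K) (hindep : iIndepFun X μ) (hp : 0 < p) (hp2 : p ≤ 2)
    (v : ι → ℝ) (s : Finset ι) :
    (∑ j ∈ s, v j ^ 2) ^ (p / 2)
      ≤ 2 * (2 * K) ^ (1 - p / 2) * ∫ ω, |∑ j ∈ s, X j ω * v j| ^ p ∂μ := by
  rw [← variance_sum_mul (fun j => (hX j).memLp.mono_exponent (by norm_num)) hvar hindep v s]
  exact (centeredKurtosisLE_sum_mul hX hK hindep v s).rpow_variance_le (by linarith) hp hp2

theorem sum_abs_rpow_le_integral_abs_sum_mul_rpow (hX : ∀ j, CenteredKurtosisLE (X j) K μ)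
    (hvar : ∀ j, Var[X j; μ] = 1) (hK : 3 ≤ K) (hindep : iIndepFun X μ) (hp : 0 < p) (hp2 : p ≤ 2)
    (v : ι → ℝ) (s : Finset ι) :
    ∑ j ∈ s, |v j| ^ p
      ≤ 2 * (2 * K) ^ (1 - p / 2) * (s.card : ℝ) ^ (1 - p / 2) *
        ∫ ω, |∑ j ∈ s, X j ω * v j| ^ p ∂μ :=
  calc ∑ j ∈ s, |v j| ^ p
      ≤ (s.card : ℝ) ^ (1 - p / 2) * (∑ j ∈ s, v j ^ 2) ^ (p / 2) := by
        simpa using sum_rpow_le_card_rpow_mul_rpow_sum hp hp2 s fun j _ => abs_nonneg (v j)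
    _ ≤ (s.card : ℝ) ^ (1 - p / 2) *
          (2 * (2 * K) ^ (1 - p / 2) * ∫ ω, |∑ j ∈ s, X j ω * v j| ^ p ∂μ) := by
        gcongr
        exact khintchine_lower_bound hX hvar hK hindep hp hp2 v s
    _ = _ := by ring

end WeightedSums

/-- The `i`-th consecutive block of length `B` in `{0, …, n - 1}`: the support of row `i` of
`blockSignRow n B σ`. -/
def indexBlock (n B i : ℕ) : Finset (Fin n) :=
  {j | (j : ℕ) / B = i}

section Sketch

variable {n B : ℕ}

theorem card_indexBlock_le (hB : 0 < B) (i : ℕ) : (indexBlock n B i).card ≤ B := by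
  have hmem : ∀ j ∈ indexBlock n B i, (j : ℕ) ∈ Finset.Ico (i * B) ((i + 1) * B) := by
    intro j hj
    rw [indexBlock, Finset.mem_filter_univ] at hj
    rw [← hj, Finset.mem_Ico, mul_comm _ B, mul_comm _ B]
    exact ⟨Nat.mul_div_le _ B, Nat.lt_mul_div_succ _ hB⟩
  simpa [Nat.card_Ico, add_mul] using
    Finset.card_le_card_of_injOn _ hmem Fin.val_injective.injOn

theorem sum_sum_indexBlock (hBn : B ∣ n) (f : Fin n → ℝ) :
    ∑ i : Fin (n / B), ∑ j ∈ indexBlock n B i, f j = ∑ j, f j := by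
  rw [Fin.sum_univ_eq_sum_range fun i => ∑ j ∈ indexBlock n B i, f j]
  exact Finset.sum_fiberwise_of_maps_to
    (fun j _ => Finset.mem_range.mpr (Nat.div_lt_div_of_lt_of_dvd hBn j.isLt)) f

theorem sum_sum_indexBlock_le {f : Fin n → ℝ} (hf : ∀ j, 0 ≤ f j) :
    ∑ i : Fin (n / B), ∑ j ∈ indexBlock n B i, f j ≤ ∑ j, f j := by
  rw [Fin.sum_univ_eq_sum_range fun i => ∑ j ∈ indexBlock n B i, f j]
  exact Finset.sum_fiberwise_le_sum_of_sum_fiber_nonneg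
    fun i _ => Finset.sum_nonneg fun j _ => hf j

theorem blockSignRow_mulVec_apply (σ v : Fin n → ℝ) (i : Fin (n / B)) :
    (blockSignRow n B σ).mulVec v i = ∑ j ∈ indexBlock n B i, σ j * v j := by
  simp [blockSignRow, Matrix.mulVec, dotProduct, indexBlock, Finset.sum_filter, ite_mul]

theorem lpNorm_nonneg (p : ℝ≥0∞) (x : Fin n → ℝ) : 0 ≤ lpNorm p x := by
  unfold _root_.lpNorm
  split_ifs
  · exact Real.iSup_nonneg fun i => abs_nonneg (x i)
  · positivity

theorem lpNorm_ofReal_rpow {p : ℝ} (hp : 0 < p) (x : Fin n → ℝ) :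
    lpNorm (ENNReal.ofReal p) x ^ p = ∑ i, |x i| ^ p := by
  rw [_root_.lpNorm, if_neg ENNReal.ofReal_ne_top, ENNReal.toReal_ofReal hp.le,
    ← Real.rpow_mul (by positivity), one_div_mul_cancel hp.ne', Real.rpow_one]

theorem lpNorm_blockSignRow_mulVec_le {p : ℝ} (hp : 1 ≤ p) (hB : 0 < B) (v : Fin n → ℝ)
    {σ : Fin n → ℝ} (hσ : ∀ j, |σ j| ≤ 1) :
    lpNorm (ENNReal.ofReal p) ((blockSignRow n B σ).mulVec v)
      ≤ (B : ℝ) ^ (1 - 1 / p) * lpNorm (ENNReal.ofReal p) v := by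
  have hp0 : 0 < p := by linarith
  have hnorm : 0 ≤ lpNorm (ENNReal.ofReal p) v := lpNorm_nonneg _ v
  rw [← Real.rpow_le_rpow_iff (lpNorm_nonneg _ _) (by positivity) hp0,
    Real.mul_rpow (by positivity) hnorm, lpNorm_ofReal_rpow hp0, lpNorm_ofReal_rpow hp0,
    ← Real.rpow_mul (Nat.cast_nonneg B), sub_mul, one_mul, one_div_mul_cancel hp0.ne']
  calc ∑ i, |(blockSignRow n B σ).mulVec v i| ^ p
      ≤ ∑ i : Fin (n / B), (B : ℝ) ^ (p - 1) * ∑ j ∈ indexBlock n B i, |v j| ^ p := by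
        refine Finset.sum_le_sum fun i _ => ?_
        rw [blockSignRow_mulVec_apply]
        refine (abs_sum_mul_rpow_le hp _ (fun j _ => hσ j) v).trans ?_
        gcongr
        exact card_indexBlock_le hB i
    _ ≤ (B : ℝ) ^ (p - 1) * ∑ j, |v j| ^ p := by
        rw [← Finset.mul_sum]
        gcongr
        exact sum_sum_indexBlock_le fun j => by positivity

theorem lpNorm_rpow_le_integral_lpNorm_blockSignRow_mulVec {Ω : Type*} {mΩ : MeasurableSpace Ω}
    {μ : Measure Ω} [IsProbabilityMeasure μ] {X : Fin n → Ω → ℝ} {K p : ℝ}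
    (hX : ∀ j, CenteredKurtosisLE (X j) K μ) (hvar : ∀ j, Var[X j; μ] = 1) (hK : 3 ≤ K)
    (hindep : iIndepFun X μ) (hp : 0 < p) (hp2 : p ≤ 2) (hB : 0 < B) (hBn : B ∣ n)
    (v : Fin n → ℝ) :
    lpNorm (ENNReal.ofReal p) v ^ p
      ≤ 2 * (2 * K) ^ (1 - p / 2) * (B : ℝ) ^ (1 - p / 2) *
        ∫ ω, lpNorm (ENNReal.ofReal p) ((blockSignRow n B fun j => X j ω).mulVec v) ^ p ∂μ := by
  simp only [lpNorm_ofReal_rpow hp, blockSignRow_mulVec_apply]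
  rw [integral_finsetSum _ fun i _ =>
      integrable_abs_sum_mul_rpow (fun j => (hX j).memLp) hp.le (by linarith) v _,
    ← sum_sum_indexBlock hBn, Finset.mul_sum]
  refine Finset.sum_le_sum fun i _ =>
    (sum_abs_rpow_le_integral_abs_sum_mul_rpow hX hvar hK hindep hp hp2 v _).trans ?_
  gcongr
  · linarith
  · exact card_indexBlock_le hB i

end Sketch

section Signs

instance isProbabilityMeasure_signMeasure : IsProbabilityMeasure signMeasure :=
  ⟨by simp [signMeasure, ENNReal.inv_two_add_inv_two]⟩

instance isProbabilityMeasure_signVec (n : ℕ) : IsProbabilityMeasure (signVec n) :=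
  inferInstanceAs (IsProbabilityMeasure (Measure.pi _))

theorem integral_signMeasure (f : ℝ → ℝ) : ∫ t, f t ∂signMeasure = (f 1 + f (-1)) / 2 := by
  have hint (a : ℝ) : Integrable f ((1 / 2 : ℝ≥0∞) • Measure.dirac a) :=
    (integrable_dirac (by simp)).smul_measure (by simp)
  rw [signMeasure, integral_add_measure (hint 1) (hint (-1)), integral_smul_measure,
    integral_smul_measure, integral_dirac, integral_dirac]
  simp only [one_div, toReal_inv, toReal_ofNat, smul_eq_mul]
  ring

theorem ae_signMeasure : ∀ᵐ t ∂signMeasure, t = 1 ∨ t = -1 := by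
  simp [signMeasure, ae_add_measure_iff, ae_dirac_eq]

theorem memLp_id_signMeasure (q : ℝ≥0∞) : MemLp id q signMeasure :=
  .of_bound aestronglyMeasurable_id 1 <| ae_signMeasure.mono fun t ht => by
    rcases ht with rfl | rfl <;> simp

variable {n : ℕ}

theorem integral_signVec_eval (j : Fin n) {f : ℝ → ℝ} (hf : Measurable f) :
    ∫ σ, f (σ j) ∂signVec n = (f 1 + f (-1)) / 2 :=
  (integral_comp_eval hf.aestronglyMeasurable).trans (integral_signMeasure f)

theorem integral_signVec_eval_pow (j : Fin n) (k : ℕ) :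
    ∫ σ, σ j ^ k ∂signVec n = (1 + (-1) ^ k) / 2 := by
  simpa using integral_signVec_eval j (measurable_id.pow_const k)

theorem variance_signVec_eval (j : Fin n) : Var[fun σ => σ j; signVec n] = 1 := by
  rw [variance_of_integral_eq_zero (measurable_pi_apply j).aemeasurable
    (by simpa using integral_signVec_eval_pow j 1), integral_signVec_eval_pow]
  norm_num

theorem centeredKurtosisLE_signVec_eval (j : Fin n) :
    CenteredKurtosisLE (fun σ => σ j) 1 (signVec n) where
  memLp := (memLp_id_signMeasure 4).comp_measurePreserving (measurePreserving_eval _ j)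
  integral_eq_zero := by simpa using integral_signVec_eval_pow j 1
  integral_pow_four_le := by
    rw [variance_signVec_eval, integral_signVec_eval_pow]
    norm_num

theorem iIndepFun_signVec_eval (n : ℕ) : iIndepFun (fun j (σ : Fin n → ℝ) => σ j) (signVec n) :=
  iIndepFun_pi fun _ => aemeasurable_id

end Signs

theorem blockSignRow_sketch_bounds_general :
    (∀ p : ℝ, 1 ≤ p → ∀ n B : ℕ, 0 < B → ∀ v σ : Fin n → ℝ, (∀ j, |σ j| ≤ 1) →
      lpNorm (ENNReal.ofReal p) ((blockSignRow n B σ).mulVec v)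
        ≤ (B : ℝ) ^ (1 - 1 / p) * lpNorm (ENNReal.ofReal p) v) ∧
    (∀ p : ℝ, 0 < p → p ≤ 2 → ∀ K : ℝ, 3 ≤ K → ∀ n B : ℕ, 0 < B → B ∣ n →
      ∀ {Ω : Type*} [MeasurableSpace Ω] (μ : Measure Ω) [IsProbabilityMeasure μ]
        (X : Fin n → Ω → ℝ), iIndepFun X μ → (∀ j, CenteredKurtosisLE (X j) K μ) →
        (∀ j, Var[X j; μ] = 1) → ∀ v : Fin n → ℝ,
          lpNorm (ENNReal.ofReal p) v ^ p
            ≤ 2 * (2 * K) ^ (1 - p / 2) * (B : ℝ) ^ (1 - p / 2) *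
              ∫ ω, lpNorm (ENNReal.ofReal p)
                ((blockSignRow n B fun j => X j ω).mulVec v) ^ p ∂μ) :=
  ⟨fun _ hp _ _ hB v _ hσ => lpNorm_blockSignRow_mulVec_le hp hB v hσ,
    fun _ hp hp2 _ hK _ _ hB hBn _ _ _ _ _ hindep hX hvar v =>
      lpNorm_rpow_le_integral_lpNorm_blockSignRow_mulVec hX hvar hK hindep hp hp2 hB hBn v⟩

/-- For the (n/B)×n random block sign-sum sketch S:
(i) for every p ∈ [1,∞), n×n matrix A, x ∈ ℝ^n and every realization of the ±1 signs,
‖SAx‖_p ≤ B^{1−1/p}·‖Ax‖_p; and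
(ii) for every p ∈ [1,2] there is a constant C_p > 0 depending only on p such that for
every n, B with B ∣ n, every A and x, ‖Ax‖_p^p ≤ C_p·B^{1−p/2}·E_σ[‖SAx‖_p^p]. -/
theorem blockSignRow_sketch_bounds :
    (∀ p : ℝ, 1 ≤ p →
      ∀ (n B : ℕ), 0 < n → 0 < B → B ∣ n →
        ∀ (A : Matrix (Fin n) (Fin n) ℝ) (x : Fin n → ℝ) (σ : Fin n → ℝ),
          (∀ j, σ j = 1 ∨ σ j = -1) →
          lpNorm (ENNReal.ofReal p) ((blockSignRow n B σ).mulVec (A.mulVec x))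
            ≤ (B : ℝ) ^ (1 - 1 / p) * lpNorm (ENNReal.ofReal p) (A.mulVec x)) ∧
    (∀ p : ℝ, 1 ≤ p → p ≤ 2 →
      ∃ C : ℝ, 0 < C ∧
        ∀ (n B : ℕ), 0 < n → 0 < B → B ∣ n →
          ∀ (A : Matrix (Fin n) (Fin n) ℝ) (x : Fin n → ℝ),
            lpNorm (ENNReal.ofReal p) (A.mulVec x) ^ p
              ≤ C * (B : ℝ) ^ (1 - p / 2) *
                ∫ σ, lpNorm (ENNReal.ofReal p) ((blockSignRow n B σ).mulVec (A.mulVec x)) ^ p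
                  ∂(signVec n)) := by
  obtain ⟨hupper, hlower⟩ := blockSignRow_sketch_bounds_general.{0}
  exact ⟨fun p hp n B _ hB _ A x σ hσ =>
      hupper p hp n B hB (A.mulVec x) σ fun j => ((abs_eq zero_le_one).mpr (hσ j)).le,
    fun p hp hp2 => ⟨2 * (2 * 3) ^ (1 - p / 2), by positivity, fun n B _ hB hBn A x =>
      hlower p (zero_lt_one.trans_le hp) hp2 3 le_rfl n B hB hBn (signVec n) (fun j σ => σ j)
        (iIndepFun_signVec_eval n) (fun j => (centeredKurtosisLE_signVec_eval j).mono (by norm_num))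
        variance_signVec_eval (A.mulVec x)⟩⟩
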